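/- Let X be a prompt set with probability distribution μ and Y a finite response set. Let π_base and π be conditional distributions with π_base(y|x) > 0 and π(y|x) > 0 for all x, y, let β ∈ (0,1], set C := E_{x∼μ, y∼π_base(·|x)}[(π_base(y|x)/π(y|x))^β], and suppose k := log(2C) ≥ 0. Define the random variable X̄ := |β·log(π(y|x)/π_base(y|x)) − β·log(π(y'|x)/π_base(y'|x))| where x ∼ μ and y, y' are i.i.d. from π_base(·|x). Then E[X̄^4] ≤ k^4 + 4(k^3 + 3k^2 + 6k + 6). -/

import Mathlib

open MeasureTheory Finset
open scoped ENNReal Classical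

/-- A fourth power is controlled by its value at `k` and an exponential centred at `k`. -/
lemma pow_four_le_add_mul_exp_sub {k t : ℝ} (hk : 0 ≤ k) (ht : 0 ≤ t) :
    t ^ 4 ≤ k ^ 4 + 4 * (k ^ 3 + 3 * k ^ 2 + 6 * k + 6) * Real.exp (t - k) := by
  rcases le_total t k with h | h
  · exact (pow_le_pow_left₀ ht h 4).trans (le_add_of_nonneg_right (by positivity))
  · obtain ⟨s, rfl⟩ : ∃ s, t = k + s := ⟨t - k, by ring⟩
    have hs : 0 ≤ s := by linarith
    rw [add_sub_cancel_left]
    have h1 : s ≤ Real.exp s := by linarith [Real.add_one_le_exp s]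
    have h2 := Real.pow_div_factorial_le_exp s hs 2
    have h3 := Real.pow_div_factorial_le_exp s hs 3
    have h4 := Real.pow_div_factorial_le_exp s hs 4
    norm_num [Nat.factorial] at h2 h3 h4
    have m1 := mul_le_mul_of_nonneg_left h1 (pow_nonneg hk 3)
    have m2 := mul_le_mul_of_nonneg_left h2 (pow_nonneg hk 2)
    have m3 := mul_le_mul_of_nonneg_left h3 hk
    linarith

/-- For `β ∈ [0, 1]`, the `β`-moment of a likelihood ratio is at most one. -/
lemma sum_mul_div_rpow_le_one {Y : Type*} [Fintype Y] {p q : Y → ℝ} (hp : ∀ y, 0 < p y)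
    (hq : ∀ y, 0 < q y) (hpsum : ∑ y, p y = 1) (hqsum : ∑ y, q y = 1)
    {β : ℝ} (hβ0 : 0 ≤ β) (hβ1 : β ≤ 1) :
    ∑ y, p y * (q y / p y) ^ β ≤ 1 := by
  calc ∑ y, p y * (q y / p y) ^ β
      ≤ ∑ y, (β * q y + (1 - β) * p y) := by
        refine sum_le_sum fun y _ => ?_
        have hratio : 0 < q y / p y := div_pos (hq y) (hp y)
        have h := rpow_one_add_le_one_add_mul_self (s := q y / p y - 1) (by linarith) hβ0 hβ1
        rw [add_sub_cancel] at h
        calc p y * (q y / p y) ^ β ≤ p y * (1 + β * (q y / p y - 1)) :=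
              mul_le_mul_of_nonneg_left h (hp y).le
          _ = β * q y + (1 - β) * p y := by
              have := (hp y).ne'
              field_simp
              ring
    _ = 1 := by
        rw [sum_add_distrib, ← mul_sum, ← mul_sum, hpsum, hqsum]
        ring

/-- The exponential moment of the absolute difference of two independent scaled log-ratios. -/
lemma sum_mul_exp_abs_log_ratio_le {Y : Type*} [Fintype Y] {p q : Y → ℝ} (hp : ∀ y, 0 < p y)
    (hq : ∀ y, 0 < q y) (hpsum : ∑ y, p y = 1) (hqsum : ∑ y, q y = 1)
    {β : ℝ} (hβ0 : 0 ≤ β) (hβ1 : β ≤ 1) :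
    ∑ y, ∑ y', p y * p y' *
        Real.exp |β * Real.log (q y / p y) - β * Real.log (q y' / p y')|
      ≤ 2 * ∑ y, p y * (p y / q y) ^ β := by
  have hexp : ∀ y, Real.exp (β * Real.log (q y / p y)) = (q y / p y) ^ β := fun y => by
    rw [Real.rpow_def_of_pos (div_pos (hq y) (hp y)), mul_comm]
  have hexp_neg : ∀ y, Real.exp (-(β * Real.log (q y / p y))) = (p y / q y) ^ β := fun y => by
    rw [Real.rpow_def_of_pos (div_pos (hp y) (hq y)), ← inv_div (q y), Real.log_inv]
    ring_nf
  have hG : 0 ≤ ∑ y, p y * (p y / q y) ^ β := sum_nonneg fun y _ =>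
    mul_nonneg (hp y).le (Real.rpow_nonneg (div_pos (hp y) (hq y)).le _)
  calc ∑ y, ∑ y', p y * p y' *
        Real.exp |β * Real.log (q y / p y) - β * Real.log (q y' / p y')|
      ≤ ∑ y, ∑ y', ((p y * (q y / p y) ^ β) * (p y' * (p y' / q y') ^ β)
          + (p y * (p y / q y) ^ β) * (p y' * (q y' / p y') ^ β)) := by
        refine sum_le_sum fun y _ => sum_le_sum fun y' _ => ?_
        simp only [← hexp, ← hexp_neg]
        refine (mul_le_mul_of_nonneg_left (Real.exp_abs_le _)
          (mul_pos (hp y) (hp y')).le).trans_eq ?_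
        rw [neg_sub, sub_eq_add_neg, sub_eq_add_neg, Real.exp_add, Real.exp_add]
        ring
    _ = 2 * ((∑ y, p y * (q y / p y) ^ β) * ∑ y, p y * (p y / q y) ^ β) := by
        simp only [sum_add_distrib, ← mul_sum, ← sum_mul]
        ring
    _ ≤ 2 * ∑ y, p y * (p y / q y) ^ β := by
        have := mul_le_of_le_one_left hG (sum_mul_div_rpow_le_one hp hq hpsum hqsum hβ0 hβ1)
        linarith

/-- Fourth-moment bound for the centered log-density-ratio statistic: with
`k = log(2C) ≥ 0`, one has `E[X̄⁴] ≤ k⁴ + 4(k³ + 3k² + 6k + 6)`. -/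
theorem log_ratio_fourth_moment
    {X : Type} [MeasurableSpace X] (μ : Measure X) [IsProbabilityMeasure μ]
    {Y : Type} [Fintype Y] [Nonempty Y]
    (pb : X → Y → ℝ) (hbpos : ∀ x y, 0 < pb x y) (hbsum : ∀ x, ∑ y, pb x y = 1)
    (hbmeas : ∀ y, Measurable fun x => pb x y)
    (pp : X → Y → ℝ) (hppos : ∀ x y, 0 < pp x y) (hpsum : ∀ x, ∑ y, pp x y = 1)
    (hpmeas : ∀ y, Measurable fun x => pp x y)
    (β : ℝ) (hβ : β ∈ Set.Ioc (0 : ℝ) 1)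
    (C : ℝ)
    (hC : C = ∫ x, ∑ y, pb x y * (pb x y / pp x y) ^ β ∂μ)
    (hCint : Integrable (fun x => ∑ y, pb x y * (pb x y / pp x y) ^ β) μ)
    (k : ℝ) (hk : k = Real.log (2 * C)) (hk0 : 0 ≤ k) :
    ∫⁻ x, ENNReal.ofReal (∑ y, ∑ y', pb x y * pb x y' *
        |β * Real.log (pp x y / pb x y) - β * Real.log (pp x y' / pb x y')| ^ 4) ∂μ
      ≤ ENNReal.ofReal (k ^ 4 + 4 * (k ^ 3 + 3 * k ^ 2 + 6 * k + 6)) := by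
  set Q : ℝ := 4 * (k ^ 3 + 3 * k ^ 2 + 6 * k + 6) with hQ
  have hQ0 : 0 ≤ Q := by positivity
  set G : X → ℝ := fun x => ∑ y, pb x y * (pb x y / pp x y) ^ β
  have hG0 : ∀ x, 0 ≤ G x := fun x => sum_nonneg fun y _ =>
    mul_nonneg (hbpos x y).le (Real.rpow_nonneg (div_pos (hbpos x y) (hppos x y)).le _)
  have hpoint : ∀ x, ∑ y, ∑ y', pb x y * pb x y' *
      |β * Real.log (pp x y / pb x y) - β * Real.log (pp x y' / pb x y')| ^ 4
        ≤ k ^ 4 + Q * Real.exp (-k) * 2 * G x := by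
    intro x
    calc _ ≤ ∑ y, ∑ y', (k ^ 4 * (pb x y * pb x y') + Q * Real.exp (-k) * (pb x y * pb x y' *
          Real.exp |β * Real.log (pp x y / pb x y) - β * Real.log (pp x y' / pb x y')|)) := by
          refine sum_le_sum fun y _ => sum_le_sum fun y' _ => ?_
          refine (mul_le_mul_of_nonneg_left (pow_four_le_add_mul_exp_sub hk0 (abs_nonneg _))
            (mul_pos (hbpos x y) (hbpos x y')).le).trans_eq ?_
          rw [sub_eq_add_neg _ k, Real.exp_add, ← hQ]
          ring
      _ = k ^ 4 + Q * Real.exp (-k) * ∑ y, ∑ y', pb x y * pb x y' *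
          Real.exp |β * Real.log (pp x y / pb x y) - β * Real.log (pp x y' / pb x y')| := by
          simp only [sum_add_distrib, ← mul_sum, hbsum, mul_one]
      _ ≤ _ := by
          rw [mul_assoc _ 2]
          gcongr
          exact sum_mul_exp_abs_log_ratio_le (hbpos x) (hppos x) (hbsum x) (hpsum x)
            hβ.1.le hβ.2
  refine (lintegral_mono fun x => ENNReal.ofReal_le_ofReal (hpoint x)).trans ?_
  have hint := hCint.const_mul (Q * Real.exp (-k) * 2)
  have hsum : Integrable (fun x => k ^ 4 + Q * Real.exp (-k) * 2 * G x) μ :=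
    (integrable_const _).add hint
  rw [← ofReal_integral_eq_lintegral_ofReal hsum
    (ae_of_all _ fun x => by have := hG0 x; dsimp only [Pi.zero_apply]; positivity)]
  refine ENNReal.ofReal_le_ofReal ?_
  rw [integral_add (integrable_const _) hint, integral_const_mul, ← hC]
  have h2C : Real.exp (-k) * (2 * C) ≤ 1 := by
    calc Real.exp (-k) * (2 * C) ≤ Real.exp (-k) * Real.exp k := by
          gcongr
          rw [hk]
          exact Real.le_exp_log _
      _ = 1 := by rw [← Real.exp_add, neg_add_cancel, Real.exp_zero]
  have := mul_le_mul_of_nonneg_left h2C hQ0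
  simp only [integral_const, probReal_univ, one_smul]
  linarith
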